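/- There exists a constant C_a, independent of m, such that for every integer m ≥ 1 and every axially symmetric function F continuously differentiable on a neighborhood of the closure of D_m, ∫_{D_m} (2/r) F ∂_r F dx ≤ (1/2) ∫_{D_m} |∂_r F|² dx + C_a ∫_{D_m} F² dx. -/

import Mathlib

noncomputable section

open Real MeasureTheory Set

/-- Inner radius of the `j`-th rectangle: `r_j = 2^(-j)`. -/
def rW (j : ℕ) : ℝ := (2 : ℝ) ^ (-(j : ℝ))

/-- Height of the `j`-th rectangle: `h_j = 2^(-β (j-1))`. -/
def hH (β : ℝ) (j : ℕ) : ℝ := (2 : ℝ) ^ (-β * ((j : ℝ) - 1))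

/-- The rectangle `S_j` in the `(r, x₃)` cross-section. -/
def Srect (β : ℝ) (j : ℕ) : Set (ℝ × ℝ) :=
  {p : ℝ × ℝ | rW j ≤ p.1 ∧ p.1 < rW (j - 1) ∧ 0 < p.2 ∧ p.2 < hH β j}

/-- The `(r, x₃)` cross-section of the domain `D_m`. -/
def Ddom (β : ℝ) (m : ℕ) : Set (ℝ × ℝ) := ⋃ j ∈ Finset.Icc 1 m, Srect β j

/-- The horizontal part `∂^H D_m` of the boundary of `D_m` (where `x₃` is locally constant). -/
def bdH (β : ℝ) (m : ℕ) : Set (ℝ × ℝ) :=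
  {p : ℝ × ℝ | p.2 = 0 ∧ rW m ≤ p.1 ∧ p.1 ≤ 1} ∪
    ⋃ j ∈ Finset.Icc 1 m,
      {p : ℝ × ℝ | p.2 = hH β j ∧ rW j ≤ p.1 ∧ p.1 ≤ rW (j - 1)}

/-- The vertical part `∂^V D_m` of the boundary of `D_m` (where `r` is locally constant). -/
def bdV (β : ℝ) (m : ℕ) : Set (ℝ × ℝ) :=
  {p : ℝ × ℝ | p.1 = 1 ∧ 0 ≤ p.2 ∧ p.2 ≤ 1} ∪
    {p : ℝ × ℝ | p.1 = rW m ∧ 0 ≤ p.2 ∧ p.2 ≤ hH β m} ∪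
    ⋃ j ∈ Finset.Icc 1 (m - 1),
      {p : ℝ × ℝ | p.1 = rW j ∧ hH β (j + 1) ≤ p.2 ∧ p.2 ≤ hH β j}

/-- The full boundary `∂ D_m` of `D_m`. -/
def bdD (β : ℝ) (m : ℕ) : Set (ℝ × ℝ) := bdH β m ∪ bdV β m

/-- The corner points of the polygonal cross-section of `D_m`
(i.e. the corner circles of the 3D domain). -/
def cornerSet (β : ℝ) (m : ℕ) : Set (ℝ × ℝ) :=
  ({(rW m, 0), ((1 : ℝ), 0), ((1 : ℝ), (1 : ℝ)), (rW m, hH β m)} : Set (ℝ × ℝ)) ∪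
    ⋃ j ∈ Finset.Icc 1 (m - 1),
      ({(rW j, hH β j), (rW j, hH β (j + 1))} : Set (ℝ × ℝ))

/-- Radial partial derivative `∂_r`. -/
def pdr (F : ℝ × ℝ → ℝ) (p : ℝ × ℝ) : ℝ := deriv (fun r => F (r, p.2)) p.1

/-- Vertical partial derivative `∂_{x₃}`. -/
def pdz (F : ℝ × ℝ → ℝ) (p : ℝ × ℝ) : ℝ := deriv (fun z => F (p.1, z)) p.2

/-- The axially symmetric Laplacian `Δ = ∂_r² + (1/r) ∂_r + ∂_{x₃}²`. -/
def cylLap (F : ℝ × ℝ → ℝ) (p : ℝ × ℝ) : ℝ :=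
  pdr (pdr F) p + (1 / p.1) * pdr F p + pdz (pdz F) p

/-- The integral of an axially symmetric function over the 3-dimensional domain `D_m`,
computed in the cross-section: `∫_{D_m} f dx = 2π ∬ F r dr dx₃`. -/
def cylIntegral (β : ℝ) (m : ℕ) (F : ℝ × ℝ → ℝ) : ℝ :=
  ∫ p in Ddom β m, F p * (2 * π * p.1)

/-- The vertical cross-section segment `D_m ∩ {r = c}` of the cross-section. -/
def vertSeg (β : ℝ) (m : ℕ) (c : ℝ) : Set ℝ := {z : ℝ | (c, z) ∈ Ddom β m}

/-!
The cylindrical weight `r` cancels the singular factor `2 / r`, so the left-hand side is `2π` times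
the plane integral of `∂_r (F²)`. Along each horizontal line the cross-section is an interval
`[a, 1)`, so integrating `∂_r ((1 - r²) F²)` leaves only the nonpositive contribution
`-(1 - a²) F(a)²` of the inner end. What remains of the left-hand side, `r² ∂_r (F²) + 2 r F²`,
carries the weight `r`, so completing a square absorbs it with a constant independent of `m`.
-/

section Slices

variable {α β E : Type*} [MeasurableSpace α] [MeasurableSpace β] [NormedAddCommGroup E]
  [NormedSpace ℝ E] {μ : Measure α} {ν : Measure β} [SFinite μ] [SFinite ν]

lemma setIntegral_prod_eq_integral_slices {s : Set (α × β)} (hs : MeasurableSet s)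
    {f : α × β → E} (hf : IntegrableOn f s (μ.prod ν)) :
    ∫ p in s, f p ∂μ.prod ν = ∫ y, ∫ x in (fun x ↦ (x, y)) ⁻¹' s, f (x, y) ∂μ ∂ν := by
  rw [← integral_indicator hs, integral_prod_symm _ (hf.integrable_indicator hs)]
  simp_rw [← integral_indicator (measurable_prodMk_right hs)]
  rfl

end Slices

/-- The radial derivative of `(1 - r² / R²) f²`, in terms of the radius `r`, the value `y` of `f`
and the value `y'` of its radial derivative. The weight vanishes at the outer radius `R`. -/
def weightedSqDeriv (R r y y' : ℝ) : ℝ := 2 * y * y' * (1 - r ^ 2 / R ^ 2) - 2 * r / R ^ 2 * y ^ 2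

section OneDimensional

variable {f f' : ℝ → ℝ} {a R : ℝ}

lemma hasDerivAt_weighted_sq {r y' : ℝ} (hf : HasDerivAt f y' r) (R : ℝ) :
    HasDerivAt (fun s ↦ (1 - s ^ 2 / R ^ 2) * f s ^ 2) (weightedSqDeriv R r (f r) y') r := by
  have hweight : HasDerivAt (fun s : ℝ ↦ 1 - s ^ 2 / R ^ 2) (-(2 * r / R ^ 2)) r := by
    simpa using ((hasDerivAt_pow 2 r).div_const (R ^ 2)).const_sub 1
  refine (hweight.mul (hf.fun_pow 2)).congr_deriv ?_
  simp only [weightedSqDeriv]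
  ring

lemma integral_weightedSqDeriv (hR : R ≠ 0) (hf : ∀ r ∈ uIcc a R, HasDerivAt f (f' r) r)
    (hf' : ContinuousOn f' (uIcc a R)) :
    ∫ r in a..R, weightedSqDeriv R r (f r) (f' r) = -((1 - a ^ 2 / R ^ 2) * f a ^ 2) := by
  have hcont : ContinuousOn f (uIcc a R) := fun r hr ↦ (hf r hr).continuousAt.continuousWithinAt
  have hint : ContinuousOn (fun r ↦ weightedSqDeriv R r (f r) (f' r)) (uIcc a R) := by
    unfold weightedSqDeriv
    fun_prop
  rw [intervalIntegral.integral_eq_sub_of_hasDerivAt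
    (fun r hr ↦ hasDerivAt_weighted_sq (hf r hr) R) hint.intervalIntegrable,
    div_self (pow_ne_zero 2 hR)]
  ring

lemma setIntegral_Ico_weightedSqDeriv_nonpos (ha : 0 ≤ a) (haR : a < R)
    (hf : ∀ r ∈ Icc a R, HasDerivAt f (f' r) r) (hf' : ContinuousOn f' (Icc a R)) :
    ∫ r in Ico a R, weightedSqDeriv R r (f r) (f' r) ≤ 0 := by
  rw [← uIcc_of_le haR.le] at hf hf'
  rw [integral_Ico_eq_integral_Ioc, ← intervalIntegral.integral_of_le haR.le,
    integral_weightedSqDeriv (ha.trans_lt haR).ne' hf hf', neg_nonpos]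
  have hweight : a ^ 2 / R ^ 2 ≤ 1 := div_le_one_of_le₀ (by gcongr) (sq_nonneg R)
  exact mul_nonneg (sub_nonneg.2 hweight) (sq_nonneg _)

lemma two_mul_mul_le_weightedSqDeriv_add {r : ℝ} (hr : 0 ≤ r) (hrR : r ≤ R) (y y' : ℝ) :
    2 * y * y' ≤
      weightedSqDeriv R r y y' + (1 / 2 * (y' ^ 2 * r) + 4 / R ^ 2 * (y ^ 2 * r)) := by
  have hweight : 0 ≤ 1 - r ^ 2 / R ^ 2 :=
    sub_nonneg.2 (div_le_one_of_le₀ (by gcongr) (sq_nonneg R))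
  have hsq : weightedSqDeriv R r y y' + (1 / 2 * (y' ^ 2 * r) + 4 / R ^ 2 * (y ^ 2 * r)) -
      2 * y * y' =
        r / 2 * (y' - 2 * r / R ^ 2 * y) ^ 2 + 2 * r / R ^ 2 * y ^ 2 * (1 - r ^ 2 / R ^ 2) := by
    simp only [weightedSqDeriv]
    ring
  rw [← sub_nonneg, hsq]
  positivity

end OneDimensional

/-- `F` has a radial partial derivative at every point of `s`, and both `F` and this derivative are
continuous on `s`. The derivative is two-sided, so `F` is also constrained near `s`. -/
structure RadiallyC1On (F : ℝ × ℝ → ℝ) (s : Set (ℝ × ℝ)) : Prop where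
  continuousOn : ContinuousOn F s
  continuousOn_pdr : ContinuousOn (pdr F) s
  differentiableAt : ∀ p ∈ s, DifferentiableAt ℝ (fun r ↦ F (r, p.2)) p.1

lemma RadiallyC1On.mono {F : ℝ × ℝ → ℝ} {s t : Set (ℝ × ℝ)} (hF : RadiallyC1On F t)
    (hst : s ⊆ t) : RadiallyC1On F s where
  continuousOn := hF.continuousOn.mono hst
  continuousOn_pdr := hF.continuousOn_pdr.mono hst
  differentiableAt p hp := hF.differentiableAt p (hst hp)

lemma hasDerivAt_radial {F : ℝ × ℝ → ℝ} {p : ℝ × ℝ} (hF : DifferentiableAt ℝ F p) :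
    HasDerivAt (fun r ↦ F (r, p.2)) (fderiv ℝ F p (1, 0)) p.1 :=
  HasFDerivAt.comp_hasDerivAt (f := fun r : ℝ ↦ (r, p.2)) p.1 hF.hasFDerivAt
    ((hasDerivAt_id p.1).prodMk (hasDerivAt_const _ _))

lemma radiallyC1On_of_contDiffOn {F : ℝ × ℝ → ℝ} {U : Set (ℝ × ℝ)} (hU : IsOpen U)
    (hF : ContDiffOn ℝ 1 F U) : RadiallyC1On F U := by
  have hderiv : ∀ p ∈ U, HasDerivAt (fun r ↦ F (r, p.2)) (fderiv ℝ F p (1, 0)) p.1 := fun p hp ↦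
    hasDerivAt_radial ((hF.differentiableOn one_ne_zero).differentiableAt (hU.mem_nhds hp))
  have hfderiv : ContinuousOn (fun p ↦ fderiv ℝ F p (1, 0)) U :=
    (hF.continuousOn_fderiv_of_isOpen hU le_rfl).clm_apply continuousOn_const
  exact ⟨hF.continuousOn, hfderiv.congr fun p hp ↦ (hderiv p hp).deriv,
    fun p hp ↦ (hderiv p hp).differentiableAt⟩

/-- Every nonempty slice of `D` at constant height is an interval `[a, R)` with `a ≥ 0`: travelling
outwards from a point of `D`, one leaves `D` only at radius `R`. -/
def SlicesReach (R : ℝ) (D : Set (ℝ × ℝ)) : Prop :=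
  ∀ z, ∃ a, 0 ≤ a ∧ (fun r ↦ (r, z)) ⁻¹' D = Ico a R

section PlaneDomain

variable {F : ℝ × ℝ → ℝ} {R : ℝ} {D : Set (ℝ × ℝ)}

lemma SlicesReach.fst_mem_Ico (hD : SlicesReach R D) {p : ℝ × ℝ} (hp : p ∈ D) :
    p.1 ∈ Ico 0 R := by
  obtain ⟨a, ha, hslice⟩ := hD p.2
  have hpa : p.1 ∈ Ico a R := hslice ▸ hp
  exact ⟨ha.trans hpa.1, hpa.2⟩

lemma setIntegral_weightedSqDeriv_nonpos (hD : SlicesReach R D) (hDm : MeasurableSet D)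
    (hF : RadiallyC1On F (closure D))
    (hint : IntegrableOn (fun p ↦ weightedSqDeriv R p.1 (F p) (pdr F p)) D) :
    ∫ p in D, weightedSqDeriv R p.1 (F p) (pdr F p) ≤ 0 := by
  rw [Measure.volume_eq_prod] at hint ⊢
  rw [setIntegral_prod_eq_integral_slices hDm hint]
  refine integral_nonpos fun z ↦ ?_
  obtain ⟨a, ha, hslice⟩ := hD z
  simp only [hslice, Pi.zero_apply]
  obtain haR | haR := lt_or_ge a R
  · have hmaps : MapsTo (fun r ↦ (r, z)) (Icc a R) (closure D) := by
      rw [← closure_Ico haR.ne]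
      exact MapsTo.closure (hslice.ge : Ico a R ⊆ (fun r ↦ (r, z)) ⁻¹' D) (by fun_prop)
    exact setIntegral_Ico_weightedSqDeriv_nonpos ha haR
      (fun r hr ↦ (hF.differentiableAt _ (hmaps hr)).hasDerivAt)
      (hF.continuousOn_pdr.comp (by fun_prop) hmaps)
  · simp [Ico_eq_empty_of_le haR]

theorem SlicesReach.setIntegral_mul_pdr_le (hD : SlicesReach R D) (hDm : MeasurableSet D)
    (hDb : Bornology.IsBounded D) (hF : RadiallyC1On F (closure D)) :
    ∫ p in D, 2 * F p * pdr F p ≤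
      1 / 2 * (∫ p in D, pdr F p ^ 2 * p.1) + 4 / R ^ 2 * ∫ p in D, F p ^ 2 * p.1 := by
  have hcont := hF.continuousOn
  have hcont' := hF.continuousOn_pdr
  have hint {g : ℝ × ℝ → ℝ} (hg : ContinuousOn g (closure D)) : IntegrableOn g D :=
    (hg.integrableOn_compact hDb.isCompact_closure).mono_set subset_closure
  have hlhs : IntegrableOn (fun p ↦ 2 * F p * pdr F p) D := hint (by fun_prop)
  have hgrad : IntegrableOn (fun p ↦ 1 / 2 * (pdr F p ^ 2 * p.1)) D := hint (by fun_prop)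
  have hsq : IntegrableOn (fun p ↦ 4 / R ^ 2 * (F p ^ 2 * p.1)) D := hint (by fun_prop)
  have hrhs : IntegrableOn
      (fun p ↦ 1 / 2 * (pdr F p ^ 2 * p.1) + 4 / R ^ 2 * (F p ^ 2 * p.1)) D := hgrad.add hsq
  have hflux : IntegrableOn (fun p ↦ weightedSqDeriv R p.1 (F p) (pdr F p)) D :=
    hint (by unfold weightedSqDeriv; fun_prop)
  calc ∫ p in D, 2 * F p * pdr F p
      ≤ ∫ p in D, (weightedSqDeriv R p.1 (F p) (pdr F p) +
          (1 / 2 * (pdr F p ^ 2 * p.1) + 4 / R ^ 2 * (F p ^ 2 * p.1))) :=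
        setIntegral_mono_on hlhs (hflux.add hrhs) hDm fun p hp ↦
          two_mul_mul_le_weightedSqDeriv_add (hD.fst_mem_Ico hp).1 (hD.fst_mem_Ico hp).2.le _ _
    _ = (∫ p in D, weightedSqDeriv R p.1 (F p) (pdr F p)) +
          (1 / 2 * (∫ p in D, pdr F p ^ 2 * p.1) + 4 / R ^ 2 * ∫ p in D, F p ^ 2 * p.1) := by
        rw [integral_add hflux hrhs, integral_add hgrad hsq, integral_const_mul,
          integral_const_mul]
    _ ≤ 1 / 2 * (∫ p in D, pdr F p ^ 2 * p.1) + 4 / R ^ 2 * ∫ p in D, F p ^ 2 * p.1 :=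
        add_le_of_nonpos_left (setIntegral_weightedSqDeriv_nonpos hD hDm hF hflux)

end PlaneDomain

lemma rW_pos (j : ℕ) : 0 < rW j := by
  unfold rW
  positivity

lemma rW_zero : rW 0 = 1 := by simp [rW]

lemma antitone_rW : Antitone rW := fun i j hij ↦ by
  unfold rW
  gcongr
  norm_num

lemma antitone_hH {β : ℝ} (hβ : 0 ≤ β) : Antitone (hH β) := fun i j hij ↦ by
  unfold hH
  rw [neg_mul, neg_mul]
  gcongr
  norm_num

lemma Srect_eq_prod (β : ℝ) (j : ℕ) :
    Srect β j = Ico (rW j) (rW (j - 1)) ×ˢ Ioo 0 (hH β j) := by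
  ext p
  simp [Srect, and_assoc]

section Ddom

variable {β : ℝ} (m : ℕ)

lemma measurableSet_Ddom : MeasurableSet (Ddom β m) :=
  Finset.measurableSet_biUnion _ fun j _ ↦ by
    rw [Srect_eq_prod]
    exact measurableSet_Ico.prod measurableSet_Ioo

lemma isBounded_Ddom : Bornology.IsBounded (Ddom β m) :=
  (Bornology.isBounded_biUnion_finset _).2 fun j _ ↦ by
    rw [Srect_eq_prod]
    exact (Metric.isBounded_Ico _ _).prod (Metric.isBounded_Ioo _ _)

variable {m} in
lemma fst_pos_of_mem_Ddom {p : ℝ × ℝ} (hp : p ∈ Ddom β m) : 0 < p.1 := by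
  simp only [Ddom, mem_iUnion] at hp
  obtain ⟨j, -, hpj⟩ := hp
  exact (rW_pos j).trans_le hpj.1

lemma Ddom_succ : Ddom β (m + 1) = Ddom β m ∪ Srect β (m + 1) := by
  rw [Ddom, ← Finset.insert_Icc_right_eq_Icc_add_one (by omega), Finset.set_biUnion_insert,
    union_comm, Ddom]

lemma slice_Ddom_of_lt_hH (hβ : 0 ≤ β) {z : ℝ} (hz : 0 < z) (hzm : z < hH β m) :
    (fun r ↦ (r, z)) ⁻¹' Ddom β m = Ico (rW m) 1 := by
  induction m with
  | zero => simp [Ddom, rW_zero]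
  | succ m ih =>
    have hrect : (fun r ↦ (r, z)) ⁻¹' Srect β (m + 1) = Ico (rW (m + 1)) (rW m) := by
      rw [Srect_eq_prod, mk_preimage_prod_left (mem_Ioo.2 ⟨hz, hzm⟩), Nat.add_sub_cancel]
    rw [Ddom_succ, preimage_union, ih (hzm.trans_le (antitone_hH hβ m.le_succ)), hrect, union_comm,
      Ico_union_Ico_eq_Ico (antitone_rW m.le_succ) (rW_zero ▸ antitone_rW m.zero_le)]

lemma slicesReach_Ddom (hβ : 0 ≤ β) : SlicesReach 1 (Ddom β m) := fun z ↦ by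
  induction m with
  | zero => exact ⟨1, zero_le_one, by simp [Ddom]⟩
  | succ m ih =>
    by_cases hz : z ∈ Ioo 0 (hH β (m + 1))
    · exact ⟨rW (m + 1), (rW_pos _).le, slice_Ddom_of_lt_hH _ hβ hz.1 hz.2⟩
    · rwa [Ddom_succ, preimage_union, Srect_eq_prod, mk_preimage_prod_left_eq_empty hz, union_empty]

lemma cylIntegral_eq (G : ℝ × ℝ → ℝ) :
    cylIntegral β m G = 2 * π * ∫ p in Ddom β m, G p * p.1 := by
  rw [cylIntegral, ← integral_const_mul]
  congr 1 with p
  ring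

end Ddom

theorem radial_term_absorption_general {β : ℝ} (hβ : 0 ≤ β) (m : ℕ) {F : ℝ × ℝ → ℝ}
    (hF : RadiallyC1On F (closure (Ddom β m))) :
    cylIntegral β m (fun p ↦ (2 / p.1) * F p * pdr F p) ≤
      (1 / 2) * cylIntegral β m (fun p ↦ pdr F p ^ 2) + 4 * cylIntegral β m fun p ↦ F p ^ 2 := by
  have hcancel : ∫ p in Ddom β m, (2 / p.1) * F p * pdr F p * p.1 =
      ∫ p in Ddom β m, 2 * F p * pdr F p :=
    setIntegral_congr_fun (measurableSet_Ddom m) fun p hp ↦ by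
      have := (fst_pos_of_mem_Ddom hp).ne'
      field_simp
  have hplane := (slicesReach_Ddom m hβ).setIntegral_mul_pdr_le (measurableSet_Ddom m)
    (isBounded_Ddom m) hF
  rw [one_pow, div_one] at hplane
  simp only [cylIntegral_eq, hcancel]
  linear_combination (2 * π) * hplane

/-- Uniform absorption of the radial boundary-type term:
`∫ (2/r) F ∂_r F ≤ (1/2) ∫ |∂_r F|² + C_a ∫ F²` on `D_m`, with `C_a` independent of `m`. -/
theorem radial_term_absorption :
    ∃ Ca : ℝ,
      ∀ (β : ℝ), 1 < β → β ≤ 1.1 → ∀ (m : ℕ), 1 ≤ m →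
      ∀ F : ℝ × ℝ → ℝ,
        (∃ U : Set (ℝ × ℝ), IsOpen U ∧ closure (Ddom β m) ⊆ U ∧ ContDiffOn ℝ 1 F U) →
        cylIntegral β m (fun p => (2 / p.1) * F p * pdr F p)
          ≤ (1 / 2) * cylIntegral β m (fun p => (pdr F p) ^ 2)
            + Ca * cylIntegral β m fun p => (F p) ^ 2 :=
  ⟨4, fun _ hβ _ m _ _ ⟨_, hU, hsub, hF⟩ ↦
    radial_term_absorption_general (by linarith) m ((radiallyC1On_of_contDiffOn hU hF).mono hsub)⟩
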